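/- Let $0 < a < b$, $s \in (0,1)$, $q \ge 1$, and let $M > 0$ satisfy $s(1-s)u^{s-2} \le M$ for all $u \in [a,b]$. Then for every $x \in [a,b]$: $\left| L_s^s(a,b) - x^s + s\,(x - A(a,b))\,x^{s-1} \right| \le M \left( \frac{3(s^2 + 3s + 4)}{(s+1)(s+2)(s+3)} \right)^{1/q} \Big[ \frac{(b-a)^2}{24} + \frac{1}{2}\big(x - A(a,b)\big)^2 \Big]$. In particular, taking $x = A(a,b)$: $\left| L_s^s(a,b) - A(a,b)^s \right| \le \frac{M}{24} \left( \frac{3(s^2 + 3s + 4)}{(s+1)(s+2)(s+3)} \right)^{1/q} (b-a)^2$. -/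

import Mathlib

open MeasureTheory Set intervalIntegral

/-!
By the mean value inequality a bound `M` for `|f''|` makes `f'` Lipschitz, so `f` differs from its
tangent line at `x` by at most `M / 2 * (t - x) ^ 2`. Averaging over `t ∈ [a, b]` turns the
tangent line into its value at the midpoint and the quadratic error into the second moment
`(b - a) ^ 2 / 12 + (x - (a + b) / 2) ^ 2` of the uniform distribution. For `f t = t ^ s` this is
the desired estimate with the factor `(⋯) ^ (1 / q)` replaced by `1`, and that factor is at least
`1` because
`3 * (s ^ 2 + 3 * s + 4) - (s + 1) * (s + 2) * (s + 3) = (1 - s) * ((s + 2) ^ 2 + 2) ≥ 0`.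
-/

section Ostrowski

variable {E : Type*} [NormedAddCommGroup E] [NormedSpace ℝ E] {f f' : ℝ → E} {a b x M : ℝ}

lemma norm_sub_sub_smul_le_of_norm_deriv_sub_le {S : Set ℝ} {t : ℝ} (hS : Convex ℝ S)
    (hf : ∀ u ∈ S, HasDerivWithinAt f (f' u) S u)
    (hf' : ∀ u ∈ S, ‖f' u - f' x‖ ≤ M * |u - x|) (hx : x ∈ S) (ht : t ∈ S) :
    ‖f t - f x - (t - x) • f' x‖ ≤ M / 2 * (t - x) ^ 2 := by
  let γ : ℝ → ℝ := AffineMap.lineMap x t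
  have hγ : MapsTo γ (Icc 0 1) S := fun r hr => hS.lineMap_mem hx ht hr
  have hγ_sub (r : ℝ) : γ r - x = r * (t - x) := by
    simp only [γ, AffineMap.lineMap_apply_module', smul_eq_mul, add_sub_cancel_right]
  let g : ℝ → E := fun r => f (γ r) - f x - r • (t - x) • f' x
  have hg : ∀ r ∈ Icc (0 : ℝ) 1,
      HasDerivWithinAt g ((t - x) • (f' (γ r) - f' x)) (Icc 0 1) r := fun r hr => by
    have hfγ := (hf _ (hγ hr)).scomp r AffineMap.hasDerivWithinAt_lineMap hγ
    have hlin := (hasDerivWithinAt_id r (Icc 0 1)).smul_const ((t - x) • f' x)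
    simpa only [one_smul, smul_sub] using! (hfγ.sub_const (f x)).sub hlin
  have hB (r : ℝ) : HasDerivAt (fun r => M / 2 * (t - x) ^ 2 * r ^ 2) (M * (t - x) ^ 2 * r) r :=
    ((hasDerivAt_pow 2 r).const_mul _).congr_deriv (by ring)
  have hbound : ∀ r ∈ Ico (0 : ℝ) 1, ‖(t - x) • (f' (γ r) - f' x)‖ ≤ M * (t - x) ^ 2 * r :=
    fun r hr => by
    have hr' := hf' _ (hγ (Ico_subset_Icc_self hr))
    rw [hγ_sub, abs_mul, abs_of_nonneg hr.1] at hr'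
    calc ‖(t - x) • (f' (γ r) - f' x)‖ = |t - x| * ‖f' (γ r) - f' x‖ := norm_smul _ _
      _ ≤ |t - x| * (M * (r * |t - x|)) := by gcongr
      _ = M * (t - x) ^ 2 * r := by rw [← sq_abs]; ring
  have hle := image_norm_le_of_norm_deriv_right_le_deriv_boundary
    (fun r hr => (hg r hr).continuousWithinAt)
    (fun r hr => (hg r (Ico_subset_Icc_self hr)).mono_of_mem_nhdsWithin
      (Icc_mem_nhdsGE_of_mem hr))
    (by simp [g, γ]) hB hbound (right_mem_Icc.2 zero_le_one)
  simpa [g, γ] using hle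

lemma intervalAverage_id_sub (hab : a ≠ b) (x : ℝ) : ⨍ t in a..b, (t - x) = (a + b) / 2 - x := by
  have hba : b - a ≠ 0 := sub_ne_zero.2 hab.symm
  rw [interval_average_eq_div, integral_comp_sub_right (fun u => u), integral_id]
  field_simp
  ring

lemma intervalAverage_sub_sq (hab : a ≠ b) (x : ℝ) :
    ⨍ t in a..b, (t - x) ^ 2 = (b - a) ^ 2 / 12 + (x - (a + b) / 2) ^ 2 := by
  have hba : b - a ≠ 0 := sub_ne_zero.2 hab.symm
  rw [interval_average_eq_div, integral_comp_sub_right (fun u => u ^ 2), integral_pow]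
  field_simp
  ring

lemma intervalAverage_sub_add_smul_eq [CompleteSpace E] (hab : a ≠ b)
    (hf : IntervalIntegrable f volume a b) (x : ℝ) (c d : E) :
    (⨍ t in a..b, f t) - c + (x - (a + b) / 2) • d = ⨍ t in a..b, (f t - c - (t - x) • d) := by
  have hba : b - a ≠ 0 := sub_ne_zero.2 hab.symm
  have hmid := intervalAverage_id_sub hab x
  rw [interval_average_eq, smul_eq_mul] at hmid
  rw [interval_average_eq, interval_average_eq,
    integral_sub (hf.sub (by simp)) (Continuous.intervalIntegrable (by fun_prop) _ _),
    integral_sub hf (by simp), intervalIntegral.integral_smul_const,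
    intervalIntegral.integral_const, smul_sub, smul_sub, inv_smul_smul₀ hba, smul_smul,
    hmid, ← neg_sub ((a + b) / 2) x, neg_smul, sub_eq_add_neg _ (_ • d)]

lemma norm_intervalAverage_sub_add_smul_le [CompleteSpace E] (hab : a < b)
    (hf : ∀ u ∈ Icc a b, HasDerivWithinAt f (f' u) (Icc a b) u)
    (hf' : ∀ u ∈ Icc a b, ‖f' u - f' x‖ ≤ M * |u - x|) (hx : x ∈ Icc a b) :
    ‖(⨍ t in a..b, f t) - f x + (x - (a + b) / 2) • f' x‖ ≤
      M * ((b - a) ^ 2 / 24 + 1 / 2 * (x - (a + b) / 2) ^ 2) := by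
  have hba : 0 < b - a := sub_pos.2 hab
  have hfi : IntervalIntegrable f volume a b := ContinuousOn.intervalIntegrable_of_Icc hab.le
    fun u hu => (hf u hu).continuousWithinAt
  have htangent : ∀ t ∈ Icc a b, ‖f t - f x - (t - x) • f' x‖ ≤ M / 2 * (t - x) ^ 2 :=
    fun t => norm_sub_sub_smul_le_of_norm_deriv_sub_le (convex_Icc a b) hf hf' hx
  rw [intervalAverage_sub_add_smul_eq hab.ne hfi]
  calc ‖⨍ t in a..b, (f t - f x - (t - x) • f' x)‖
      = (b - a)⁻¹ * ‖∫ t in a..b, (f t - f x - (t - x) • f' x)‖ := by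
        rw [interval_average_eq, norm_smul, norm_inv, Real.norm_of_nonneg hba.le]
    _ ≤ (b - a)⁻¹ * ∫ t in a..b, M / 2 * (t - x) ^ 2 := by
        gcongr
        exact intervalIntegral.norm_integral_le_of_norm_le hab.le
          (.of_forall fun t ht => htangent t (Ioc_subset_Icc_self ht))
          (Continuous.intervalIntegrable (by fun_prop) _ _)
    _ = M / 2 * ⨍ t in a..b, (t - x) ^ 2 := by
        rw [intervalIntegral.integral_const_mul, interval_average_eq, smul_eq_mul, mul_left_comm]
    _ = M * ((b - a) ^ 2 / 24 + 1 / 2 * (x - (a + b) / 2) ^ 2) := by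
        rw [intervalAverage_sub_sq hab.ne]
        ring

lemma norm_intervalAverage_sub_add_smul_le_of_norm_deriv_le [CompleteSpace E] {f'' : ℝ → E}
    (hab : a < b) (hf : ∀ u ∈ Icc a b, HasDerivWithinAt f (f' u) (Icc a b) u)
    (hf' : ∀ u ∈ Icc a b, HasDerivWithinAt f' (f'' u) (Icc a b) u)
    (hf'' : ∀ u ∈ Icc a b, ‖f'' u‖ ≤ M) (hx : x ∈ Icc a b) :
    ‖(⨍ t in a..b, f t) - f x + (x - (a + b) / 2) • f' x‖ ≤
      M * ((b - a) ^ 2 / 24 + 1 / 2 * (x - (a + b) / 2) ^ 2) :=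
  norm_intervalAverage_sub_add_smul_le hab hf
    (fun _ hu => (convex_Icc a b).norm_image_sub_le_of_norm_hasDerivWithin_le hf' hf'' hx hu) hx

end Ostrowski

section Rpow

variable {a b s : ℝ}

lemma intervalAverage_rpow (ha : 0 < a) (hb : 0 < b) (hs : s ≠ -1) :
    ⨍ t in a..b, t ^ s = (b ^ (s + 1) - a ^ (s + 1)) / ((s + 1) * (b - a)) := by
  rw [interval_average_eq_div, integral_rpow (Or.inr ⟨hs, notMem_uIcc_of_lt ha hb⟩), div_div]

lemma hasDerivAt_mul_rpow_sub_one {u : ℝ} (hu : u ≠ 0) (s : ℝ) :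
    HasDerivAt (fun t : ℝ => s * t ^ (s - 1)) (-(s * (1 - s)) * u ^ (s - 2)) u := by
  refine ((Real.hasDerivAt_rpow_const (p := s - 1) (Or.inl hu)).const_mul s).congr_deriv ?_
  rw [show s - 1 - 1 = s - 2 by ring]
  ring

lemma abs_average_rpow_sub_add_le {x M : ℝ} (ha : 0 < a) (hab : a < b) (hs : s ≠ -1)
    (hbd : ∀ u ∈ Icc a b, |s * (1 - s)| * u ^ (s - 2) ≤ M) (hx : x ∈ Icc a b) :
    |(b ^ (s + 1) - a ^ (s + 1)) / ((s + 1) * (b - a)) - x ^ s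
        + s * (x - (a + b) / 2) * x ^ (s - 1)|
      ≤ M * ((b - a) ^ 2 / 24 + 1 / 2 * (x - (a + b) / 2) ^ 2) := by
  have hpos {u : ℝ} (hu : u ∈ Icc a b) : 0 < u := ha.trans_le hu.1
  rw [← intervalAverage_rpow ha (ha.trans hab) hs, mul_comm s, mul_assoc]
  refine norm_intervalAverage_sub_add_smul_le_of_norm_deriv_le (f' := fun u => s * u ^ (s - 1))
    hab (fun u hu => (Real.hasDerivAt_rpow_const (Or.inl (hpos hu).ne')).hasDerivWithinAt)
    (fun u hu => (hasDerivAt_mul_rpow_sub_one (hpos hu).ne' s).hasDerivWithinAt)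
    (fun u hu => ?_) hx
  rw [norm_mul, norm_neg, Real.norm_eq_abs, Real.norm_of_nonneg (Real.rpow_nonneg (hpos hu).le _)]
  exact hbd u hu

lemma one_le_ostrowski_const_rpow (hs : s ∈ Ioc (-1 : ℝ) 1) {r : ℝ} (hr : 0 ≤ r) :
    1 ≤ (3 * (s ^ 2 + 3 * s + 4) / ((s + 1) * (s + 2) * (s + 3))) ^ r := by
  have h1 : 0 < s + 1 := by linarith [hs.1]
  have h2 : 0 < s + 2 := by linarith
  have h3 : 0 < s + 3 := by linarith
  have hfactor : 3 * (s ^ 2 + 3 * s + 4) - (s + 1) * (s + 2) * (s + 3) =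
      (1 - s) * ((s + 2) ^ 2 + 2) := by ring
  have hnonneg : 0 ≤ (1 - s) * ((s + 2) ^ 2 + 2) :=
    mul_nonneg (sub_nonneg.2 hs.2) (by positivity)
  refine Real.one_le_rpow ((one_le_div (by positivity)).2 (sub_nonneg.1 ?_)) hr
  exact hfactor ▸ hnonneg

end Rpow

theorem stmt17_general {a b s M : ℝ} (ha : 0 < a) (hab : a < b) (hs : s ≠ -1)
    (hbd : ∀ u ∈ Icc a b, |s * (1 - s)| * u ^ (s - 2) ≤ M) :
    (∀ x ∈ Icc a b,
        |(b ^ (s + 1) - a ^ (s + 1)) / ((s + 1) * (b - a)) - x ^ s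
            + s * (x - (a + b) / 2) * x ^ (s - 1)|
          ≤ M * ((b - a) ^ 2 / 24 + 1 / 2 * (x - (a + b) / 2) ^ 2))
      ∧ |(b ^ (s + 1) - a ^ (s + 1)) / ((s + 1) * (b - a)) - ((a + b) / 2) ^ s|
          ≤ M / 24 * (b - a) ^ 2 := by
  refine ⟨fun x => abs_average_rpow_sub_add_le ha hab hs hbd, ?_⟩
  have hmid := abs_average_rpow_sub_add_le (x := (a + b) / 2) ha hab hs hbd
    ⟨by linarith, by linarith⟩
  rw [sub_self, mul_zero, zero_mul, add_zero] at hmid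
  exact hmid.trans_eq (by ring)

theorem stmt17 (a b : ℝ) (ha : 0 < a) (hab : a < b) (s : ℝ) (hs : s ∈ Set.Ioo (0:ℝ) 1)
    (M : ℝ) (hM : 0 < M) (hbd : ∀ u ∈ Set.Icc a b, s * (1 - s) * u ^ (s - 2) ≤ M)
    (q : ℝ) (hq : 1 ≤ q) :
    (∀ x ∈ Set.Icc a b,
        |(b ^ (s + 1) - a ^ (s + 1)) / ((s + 1) * (b - a)) - x ^ s + s * (x - ((a + b) / 2)) * x ^ (s - 1)|
          ≤ M * (3 * (s ^ 2 + 3 * s + 4) / ((s + 1) * (s + 2) * (s + 3))) ^ (1 / q) *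
              ((b - a) ^ 2 / 24 + (1 / 2) * (x - ((a + b) / 2)) ^ 2))
      ∧ |(b ^ (s + 1) - a ^ (s + 1)) / ((s + 1) * (b - a)) - ((a + b) / 2) ^ s|
          ≤ M / 24 * (3 * (s ^ 2 + 3 * s + 4) / ((s + 1) * (s + 2) * (s + 3))) ^ (1 / q) * (b - a) ^ 2 := by
  have hMC := le_mul_of_one_le_right hM.le
    (one_le_ostrowski_const_rpow ⟨by linarith [hs.1], hs.2.le⟩ (by positivity : 0 ≤ 1 / q))
  rw [← mul_div_right_comm M]
  refine stmt17_general ha hab (by linarith [hs.1]) fun u hu => ?_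
  rw [abs_of_pos (mul_pos hs.1 (sub_pos.2 hs.2))]
  exact (hbd u hu).trans hMC
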